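/- Let R be a commutative ring and π ∈ R an element such that R is π-adically complete and separated. Then reduction modulo π induces a bijection on isomorphism classes of invertible modules (an isomorphism of Picard groups Pic(R) → Pic(R/πR)); concretely: (i) if M is an invertible R-module such that M/πM is a free R/πR-module, then M is a free R-module, and (ii) every invertible R/πR-module is isomorphic to M/πM for some invertible R-module M. (Lemma 2.6.) -/

import Mathlib

open scoped TensorProduct

/-- An invertible module over a commutative ring: a finitely generated projective module of
constant rank `1` (rank `1` at every prime). -/
def IsInvertibleModule (R : Type u) [CommRing R]
    (M : Type v) [AddCommGroup M] [Module R M] : Prop :=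
  Module.Finite R M ∧ Module.Projective R M ∧
    ∀ (P : Ideal R) [P.IsPrime],
      Module.finrank (Localization.AtPrime P) (LocalizedModule P.primeCompl M) = 1

/-!
If `I` lies in the Jacobson radical, an isomorphism `M/IM ≃ N/IN` of finite projective modules
lifts by projectivity to maps `M → N` and `N → M`, surjective by Nakayama; a surjective endomorphism
of a finite module is injective, so `M ≃ N`. Moreover every closed point of `Spec R` lies in
`V(I)`, so the rank function of `M` is determined by that of `M/IM`.

If `R` is `I`-adically complete, a finite projective `R/I`-module is the image of an idempotent
endomorphism of `(R/I)ⁿ`. Lift it to an endomorphism `a` of `Rⁿ`. Newton's iteration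
`a ↦ 3a² - 2a³` for `X² - X` squares the defect `a² - a`, up to a factor, hence converges
`I`-adically to an idempotent congruent to `a`, whose image is the required lift.
-/

section VanishingMod

variable {R : Type*} [CommRing R] {I J K : Ideal R}
  {M : Type*} [AddCommGroup M] [Module R M] {N : Type*} [AddCommGroup N] [Module R N]
  {P : Type*} [AddCommGroup P] [Module R P]

/-- The submodule of the linear maps `M → N` that vanish modulo `J`, i.e. take values in `JN`. For
`J = Iᵏ` these submodules form the filtration in which sequences of linear maps converge. -/
def vanishingMod (J : Ideal R) : Submodule R (M →ₗ[R] N) :=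
  Submodule.compatibleMaps ⊤ (J • ⊤)

lemma mem_vanishingMod {f : M →ₗ[R] N} :
    f ∈ vanishingMod J ↔ ∀ x, f x ∈ (J • ⊤ : Submodule R N) :=
  top_le_iff.trans Submodule.eq_top_iff'

lemma vanishingMod_mono (h : J ≤ K) :
    vanishingMod J ≤ (vanishingMod K : Submodule R (M →ₗ[R] N)) := fun _ hf ↦
  mem_vanishingMod.mpr fun x ↦ Submodule.smul_mono_left h (mem_vanishingMod.mp hf x)

lemma comp_mem_vanishingMod_mul {f : M →ₗ[R] N} {g : P →ₗ[R] M}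
    (hf : f ∈ vanishingMod J) (hg : g ∈ vanishingMod K) : f ∘ₗ g ∈ vanishingMod (J * K) := by
  rw [mem_vanishingMod] at hg ⊢
  have map_le : (K • ⊤ : Submodule R M).map f ≤ (J * K) • ⊤ :=
    calc (K • ⊤ : Submodule R M).map f = K • (⊤ : Submodule R M).map f := Submodule.map_smul'' ..
      _ ≤ K • J • ⊤ := Submodule.smul_mono le_rfl (Submodule.map_le_iff_le_comap.mpr hf)
      _ = (J * K) • ⊤ := by rw [← Submodule.mul_smul, mul_comm]
  exact fun x ↦ map_le (Submodule.mem_map_of_mem (hg x))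

lemma comp_mem_vanishingMod_of_left {f : M →ₗ[R] N} (hf : f ∈ vanishingMod J) (g : P →ₗ[R] M) :
    f ∘ₗ g ∈ vanishingMod J :=
  mem_vanishingMod.mpr fun x ↦ mem_vanishingMod.mp hf (g x)

lemma comp_mem_vanishingMod_of_right (f : M →ₗ[R] N) {g : P →ₗ[R] M} (hg : g ∈ vanishingMod K) :
    f ∘ₗ g ∈ vanishingMod K :=
  mem_vanishingMod.mpr fun x ↦ Submodule.smul_top_le_comap_smul_top K f (mem_vanishingMod.mp hg x)

lemma eq_zero_of_forall_mem_vanishingMod_pow [IsHausdorff I N] {f : M →ₗ[R] N}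
    (hf : ∀ k, f ∈ vanishingMod (I ^ k)) : f = 0 :=
  LinearMap.ext fun x ↦
    IsHausdorff.haus ‹_› _ fun k ↦ SModEq.zero.mpr (mem_vanishingMod.mp (hf k) x)

lemma exists_forall_sub_mem_vanishingMod_pow [IsAdicComplete I N] {s : ℕ → M →ₗ[R] N}
    (hs : ∀ k, s (k + 1) - s k ∈ vanishingMod (I ^ k)) :
    ∃ f : M →ₗ[R] N, ∀ k, s k - f ∈ vanishingMod (I ^ k) := by
  let t (k : ℕ) : M →ₗ[R] N ⧸ (I ^ k • ⊤ : Submodule R N) := Submodule.mkQ _ ∘ₗ s k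
  have t_compatible {k : ℕ} : Submodule.factorPow I N k.le_succ ∘ₗ t (k + 1) = t k :=
    LinearMap.ext fun x ↦ (Submodule.Quotient.eq _).mpr (mem_vanishingMod.mp (hs k) x)
  refine ⟨IsAdicComplete.StrictMono.lift I strictMono_id t t_compatible, fun k ↦
    mem_vanishingMod.mpr fun x ↦ (Submodule.Quotient.eq _).mp ?_⟩
  exact (IsAdicComplete.StrictMono.mk_lift I strictMono_id t t_compatible x).symm

end VanishingMod

section QuotientBaseChange

variable {R : Type*} [CommRing R] {I : Ideal R}
  {M : Type*} [AddCommGroup M] [Module R M] {N : Type*} [AddCommGroup N] [Module R N]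

lemma one_tmul_quotient_eq_iff {x y : M} :
    (1 : R ⧸ I) ⊗ₜ[R] x = 1 ⊗ₜ y ↔ x - y ∈ (I • ⊤ : Submodule R M) := by
  rw [← (TensorProduct.quotTensorEquivQuotSMul M I).injective.eq_iff,
    TensorProduct.quotTensorEquivQuotSMul_mk_one_tmul,
    TensorProduct.quotTensorEquivQuotSMul_mk_one_tmul, Submodule.Quotient.eq]

lemma baseChange_quotient_eq_iff {f g : M →ₗ[R] N} :
    f.baseChange (R ⧸ I) = g.baseChange (R ⧸ I) ↔ f - g ∈ vanishingMod I := by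
  simp only [mem_vanishingMod, LinearMap.sub_apply, ← one_tmul_quotient_eq_iff]
  exact ⟨fun h x ↦ LinearMap.congr_fun h (1 ⊗ₜ x),
    fun h ↦ TensorProduct.AlgebraTensorModule.curry_injective <| LinearMap.ext_ring <|
      LinearMap.ext h⟩

lemma exists_baseChange_quotient_eq [Module.Projective R M]
    (ψ : ((R ⧸ I) ⊗[R] M) →ₗ[R ⧸ I] ((R ⧸ I) ⊗[R] N)) :
    ∃ f : M →ₗ[R] N, f.baseChange (R ⧸ I) = ψ := by
  obtain ⟨f, hf⟩ := Module.projective_lifting_property (TensorProduct.mk R (R ⧸ I) N 1)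
    (ψ.restrictScalars R ∘ₗ TensorProduct.mk R (R ⧸ I) M 1)
    (TensorProduct.mk_surjective R N (R ⧸ I) Ideal.Quotient.mk_surjective)
  exact ⟨f, TensorProduct.AlgebraTensorModule.curry_injective <| LinearMap.ext_ring hf⟩

end QuotientBaseChange

section Jacobson

variable {R : Type*} [CommRing R] {I : Ideal R}
  {M : Type*} [AddCommGroup M] [Module R M] [Module.Finite R M]
  {N : Type*} [AddCommGroup N] [Module R N]

lemma surjective_of_baseChange_quotient_surjective (hI : I ≤ Ideal.jacobson ⊥) {f : N →ₗ[R] M}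
    (hf : Function.Surjective (f.baseChange (R ⧸ I))) : Function.Surjective f := by
  refine f.surjective_of_surjective_comp_mkQ I hI fun y ↦ ?_
  obtain ⟨z, hz⟩ := hf ((TensorProduct.quotTensorEquivQuotSMul M I).symm y)
  obtain ⟨x, rfl⟩ := TensorProduct.mk_surjective R N (R ⧸ I) Ideal.Quotient.mk_surjective z
  exact ⟨x, by simpa using congrArg (TensorProduct.quotTensorEquivQuotSMul M I) hz⟩

lemma nonempty_linearEquiv_of_quotient [Module.Finite R N] [Module.Projective R M]
    [Module.Projective R N] (hI : I ≤ Ideal.jacobson ⊥)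
    (ψ : ((R ⧸ I) ⊗[R] M) ≃ₗ[R ⧸ I] ((R ⧸ I) ⊗[R] N)) : Nonempty (M ≃ₗ[R] N) := by
  obtain ⟨f, hf⟩ := exists_baseChange_quotient_eq ψ.toLinearMap
  obtain ⟨g, hg⟩ := exists_baseChange_quotient_eq ψ.symm.toLinearMap
  have f_surjective : Function.Surjective f :=
    surjective_of_baseChange_quotient_surjective hI (hf ▸ ψ.surjective)
  have g_surjective : Function.Surjective g :=
    surjective_of_baseChange_quotient_surjective hI (hg ▸ ψ.symm.surjective)
  have gf_injective : Function.Injective (g ∘ f) :=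
    OrzechProperty.injective_of_surjective_endomorphism (g ∘ₗ f) (g_surjective.comp f_surjective)
  exact ⟨LinearEquiv.ofBijective f ⟨gf_injective.of_comp, f_surjective⟩⟩

lemma free_of_free_quotient [Module.Projective R M] (hI : I ≤ Ideal.jacobson ⊥)
    [Module.Free (R ⧸ I) ((R ⧸ I) ⊗[R] M)] : Module.Free R M := by
  classical
  let b := Module.Free.chooseBasis (R ⧸ I) ((R ⧸ I) ⊗[R] M)
  obtain ⟨e⟩ := nonempty_linearEquiv_of_quotient hI
    (TensorProduct.piScalarRight R (R ⧸ I) (R ⧸ I) _ ≪≫ₗ b.equivFun.symm)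
  exact Module.Free.of_equiv e

lemma exists_rankAtStalk_eq_quotient [Module.Flat R M] (hI : I ≤ Ideal.jacobson ⊥)
    (p : PrimeSpectrum R) :
    ∃ q : PrimeSpectrum (R ⧸ I),
      Module.rankAtStalk M p = Module.rankAtStalk ((R ⧸ I) ⊗[R] M) q := by
  obtain ⟨m, hm, hpm⟩ := Ideal.exists_le_maximal p.asIdeal p.2.ne_top
  have hIm : I ≤ m := hI.trans (sInf_le ⟨bot_le, hm⟩)
  obtain ⟨q, hq⟩ : (⟨m, hm.isPrime⟩ : PrimeSpectrum R) ∈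
      Set.range (PrimeSpectrum.comap (algebraMap R (R ⧸ I))) := by
    rw [range_comap_of_surjective _ (algebraMap R (R ⧸ I))
      Ideal.Quotient.mk_surjective]
    simpa [PrimeSpectrum.mem_zeroLocus] using hIm
  refine ⟨q, ?_⟩
  rw [Module.rankAtStalk_baseChange, hq]
  exact Module.rankAtStalk_eq_of_le_of_finite_of_flat M hpm

end Jacobson

section IdempotentLifting

/-- One step of Newton's method for the polynomial `X² - X`, starting from `a`. Since
`(2a - 1)² = 1 + 4(a² - a)`, the factor `2a - 1` stands in for the inverse of the derivative, and
nothing has to be inverted: the step is `a - (2a - 1)(a² - a)`. -/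
def idempotentNewtonStep {A : Type*} [Ring A] (a : A) : A := 3 * a ^ 2 - 2 * a ^ 3

lemma idempotentNewtonStep_sub_self {A : Type*} [Ring A] (a : A) :
    idempotentNewtonStep a - a = (1 - 2 * a) * (a * a - a) := by
  unfold idempotentNewtonStep
  noncomm_ring

lemma idempotentNewtonStep_mul_self_sub_self {A : Type*} [Ring A] (a : A) :
    idempotentNewtonStep a * idempotentNewtonStep a - idempotentNewtonStep a =
      (4 * a ^ 2 - 4 * a - 3) * ((a * a - a) * (a * a - a)) := by
  unfold idempotentNewtonStep
  noncomm_ring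

variable {R : Type*} [CommRing R] {I : Ideal R} {M : Type*} [AddCommGroup M] [Module R M]

lemma iterate_idempotentNewtonStep_mem_vanishingMod {a : Module.End R M}
    (ha : a * a - a ∈ vanishingMod I) (k : ℕ) :
    idempotentNewtonStep^[k] a * idempotentNewtonStep^[k] a - idempotentNewtonStep^[k] a ∈
      vanishingMod (I ^ (k + 1)) := by
  induction k with
  | zero => simpa using ha
  | succ k ih =>
    rw [Function.iterate_succ_apply', idempotentNewtonStep_mul_self_sub_self]
    refine comp_mem_vanishingMod_of_right _ (vanishingMod_mono ?_ (comp_mem_vanishingMod_mul ih ih))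
    rw [← pow_add]
    exact Ideal.pow_le_pow_right (by lia)

lemma isIdempotentElem_of_forall_sub_mem_vanishingMod_pow [IsHausdorff I M]
    {s : ℕ → Module.End R M} {e : Module.End R M}
    (hs : ∀ k, s k * s k - s k ∈ vanishingMod (I ^ k))
    (he : ∀ k, s k - e ∈ vanishingMod (I ^ k)) : IsIdempotentElem e := by
  refine sub_eq_zero.mp (eq_zero_of_forall_mem_vanishingMod_pow (I := I) fun k ↦ ?_)
  have defect_eq :
      e * e - e = (s k * s k - s k) - s k * (s k - e) - (s k - e) * e + (s k - e) := by
    noncomm_ring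
  rw [defect_eq]
  exact add_mem (sub_mem (sub_mem (hs k) (comp_mem_vanishingMod_of_right _ (he k)))
    (comp_mem_vanishingMod_of_left (he k) _)) (he k)

lemma exists_isIdempotentElem_sub_mem_vanishingMod [IsAdicComplete I M] {a : Module.End R M}
    (ha : a * a - a ∈ vanishingMod I) :
    ∃ e : Module.End R M, IsIdempotentElem e ∧ e - a ∈ vanishingMod I := by
  let s (k : ℕ) : Module.End R M := idempotentNewtonStep^[k] a
  have defect_mem (k : ℕ) : s k * s k - s k ∈ vanishingMod (I ^ (k + 1)) :=
    iterate_idempotentNewtonStep_mem_vanishingMod ha k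
  have step_mem (k : ℕ) : s (k + 1) - s k ∈ vanishingMod (I ^ (k + 1)) := by
    simp only [s, Function.iterate_succ_apply', idempotentNewtonStep_sub_self]
    exact comp_mem_vanishingMod_of_right _ (defect_mem k)
  have pow_succ_le (k : ℕ) : I ^ (k + 1) ≤ I ^ k := Ideal.pow_le_pow_right k.le_succ
  obtain ⟨e, he⟩ := exists_forall_sub_mem_vanishingMod_pow fun k ↦
    vanishingMod_mono (pow_succ_le k) (step_mem k)
  refine ⟨e, isIdempotentElem_of_forall_sub_mem_vanishingMod_pow
    (fun k ↦ vanishingMod_mono (pow_succ_le k) (defect_mem k)) he, ?_⟩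
  have sub_mem_one : (s 1 - s 0) - (s 1 - e) ∈ vanishingMod (I ^ 1) :=
    sub_mem (step_mem 0) (he 1)
  simpa [s] using sub_mem_one

end IdempotentLifting

section ProjectiveLifting

lemma isAdicComplete_pi {R ι : Type*} [CommRing R] (I : Ideal R) [Finite ι] (M : ι → Type*)
    [∀ i, AddCommGroup (M i)] [∀ i, Module R (M i)] [∀ i, IsAdicComplete I (M i)] :
    IsAdicComplete I (∀ i, M i) := by
  classical
  have := Fintype.ofFinite ι
  have of_pi : AdicCompletion.piEquivOfFintype I M ∘ AdicCompletion.of I (∀ i, M i) =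
      Pi.map fun i ↦ AdicCompletion.of I (M i) := by
    ext; simp [AdicCompletion.pi]
  rw [← AdicCompletion.of_bijective_iff,
    ← (AdicCompletion.piEquivOfFintype I M).bijective.of_comp_iff', of_pi]
  exact .piMap fun i ↦ AdicCompletion.of_bijective_iff.mpr inferInstance

/-- The canonical isomorphism between two splittings `M ⇄ P` and `N ⇄ P` of one idempotent
`i ∘ p = j ∘ q` of `P`. It identifies the reduction of the image of a lifted idempotent with the
given projective module. -/
def linearEquivOfSplittings {R M N P : Type*} [Ring R] [AddCommGroup M] [Module R M]
    [AddCommGroup N] [Module R N] [AddCommGroup P] [Module R P]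
    {i : M →ₗ[R] P} {p : P →ₗ[R] M} {j : N →ₗ[R] P} {q : P →ₗ[R] N}
    (hpi : p ∘ₗ i = .id) (hqj : q ∘ₗ j = .id) (h : i ∘ₗ p = j ∘ₗ q) : M ≃ₗ[R] N :=
  LinearEquiv.ofLinearMap (q ∘ₗ i) (p ∘ₗ j)
    (calc (q ∘ₗ i) ∘ₗ p ∘ₗ j = q ∘ₗ (i ∘ₗ p) ∘ₗ j := rfl
      _ = (q ∘ₗ j) ∘ₗ q ∘ₗ j := by rw [h]; rfl
      _ = .id := by rw [hqj, LinearMap.id_comp])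
    (calc (p ∘ₗ j) ∘ₗ q ∘ₗ i = p ∘ₗ (j ∘ₗ q) ∘ₗ i := rfl
      _ = (p ∘ₗ i) ∘ₗ p ∘ₗ i := by rw [← h]; rfl
      _ = .id := by rw [hpi, LinearMap.id_comp])

variable {R : Type u} [CommRing R] {I : Ideal R}

lemma exists_projective_lift_of_splitting {P : Type u} [AddCommGroup P] [Module R P]
    [Module.Finite R P] [Module.Projective R P] [IsAdicComplete I P]
    {M₀ : Type*} [AddCommGroup M₀] [Module (R ⧸ I) M₀]
    {j : M₀ →ₗ[R ⧸ I] (R ⧸ I) ⊗[R] P} {q : (R ⧸ I) ⊗[R] P →ₗ[R ⧸ I] M₀} (hqj : q ∘ₗ j = .id) :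
    ∃ (M : Type u) (_ : AddCommGroup M) (_ : Module R M), Module.Finite R M ∧
      Module.Projective R M ∧ Nonempty (((R ⧸ I) ⊗[R] M) ≃ₗ[R ⧸ I] M₀) := by
  obtain ⟨a, ha⟩ := exists_baseChange_quotient_eq (j ∘ₗ q)
  have defect_mem : a * a - a ∈ vanishingMod I := baseChange_quotient_eq_iff.mp <|
    calc (a * a).baseChange (R ⧸ I) = j ∘ₗ (q ∘ₗ j) ∘ₗ q := by
          rw [Module.End.mul_eq_comp, LinearMap.baseChange_comp, ha]; rfl
      _ = a.baseChange (R ⧸ I) := by rw [hqj, LinearMap.id_comp, ha]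
  obtain ⟨e, e_idem, e_sub_mem⟩ := exists_isIdempotentElem_sub_mem_vanishingMod defect_mem
  let i := (LinearMap.range e).subtype
  have proj := LinearMap.IsIdempotentElem.isProj_range e e_idem
  let p := proj.codRestrict
  have hpi : p ∘ₗ i = .id := LinearMap.ext proj.codRestrict_apply_cod
  have baseChange_pi : p.baseChange (R ⧸ I) ∘ₗ i.baseChange (R ⧸ I) = .id := by
    rw [← LinearMap.baseChange_comp, hpi, LinearMap.baseChange_id]
  have baseChange_ip : i.baseChange (R ⧸ I) ∘ₗ p.baseChange (R ⧸ I) = j ∘ₗ q := by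
    rw [← LinearMap.baseChange_comp, proj.subtype_comp_codRestrict, ← ha]
    exact baseChange_quotient_eq_iff.mpr e_sub_mem
  exact ⟨LinearMap.range e, inferInstance, inferInstance, inferInstance, .of_split i p hpi,
    ⟨linearEquivOfSplittings baseChange_pi hqj baseChange_ip⟩⟩

lemma exists_projective_lift [IsAdicComplete I R] (M₀ : Type*) [AddCommGroup M₀]
    [Module (R ⧸ I) M₀] [Module.Finite (R ⧸ I) M₀] [Module.Projective (R ⧸ I) M₀] :
    ∃ (M : Type u) (_ : AddCommGroup M) (_ : Module R M), Module.Finite R M ∧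
      Module.Projective R M ∧ Nonempty (((R ⧸ I) ⊗[R] M) ≃ₗ[R ⧸ I] M₀) := by
  obtain ⟨n, f, g, -, -, hfg⟩ := Module.Finite.exists_comp_eq_id_of_projective (R ⧸ I) M₀
  have : IsAdicComplete I (Fin n → R) := isAdicComplete_pi I fun _ ↦ R
  let φ : (R ⧸ I) ⊗[R] (Fin n → R) ≃ₗ[R ⧸ I] (Fin n → R ⧸ I) :=
    TensorProduct.piScalarRight R (R ⧸ I) (R ⧸ I) (Fin n)
  refine exists_projective_lift_of_splitting (j := φ.symm.toLinearMap ∘ₗ g)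
    (q := f ∘ₗ φ.toLinearMap) ?_
  rw [← hfg]
  ext
  simp

end ProjectiveLifting

lemma IsInvertibleModule.of_quotient {R : Type*} [CommRing R] {I : Ideal R}
    (hI : I ≤ Ideal.jacobson ⊥) {M : Type*} [AddCommGroup M] [Module R M] [Module.Finite R M]
    [Module.Projective R M] (h : IsInvertibleModule (R ⧸ I) ((R ⧸ I) ⊗[R] M)) :
    IsInvertibleModule R M := by
  obtain ⟨-, -, rank_eq_one⟩ := h
  refine ⟨‹_›, ‹_›, fun p hp ↦ ?_⟩
  obtain ⟨q, hq⟩ := exists_rankAtStalk_eq_quotient (M := M) hI ⟨p, hp⟩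
  exact hq.trans (rank_eq_one q.asIdeal)

lemma IsInvertibleModule.of_linearEquiv {R : Type*} [CommRing R] {M N : Type*} [AddCommGroup M]
    [Module R M] [AddCommGroup N] [Module R N] (h : IsInvertibleModule R M) (e : M ≃ₗ[R] N) :
    IsInvertibleModule R N := by
  obtain ⟨_, _, rank_eq_one⟩ := h
  refine ⟨.equiv e, .of_equiv e, fun p hp ↦ ?_⟩
  exact (congrFun (Module.rankAtStalk_eq_of_equiv e) ⟨p, hp⟩).symm.trans (rank_eq_one p)

theorem picard_iso_of_adicComplete_general {R : Type u} [CommRing R] (I : Ideal R)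
    [IsAdicComplete I R] :
    (∀ (M : Type*) [AddCommGroup M] [Module R M] [Module.Finite R M] [Module.Projective R M],
      Module.Free (R ⧸ I) ((R ⧸ I) ⊗[R] M) → Module.Free R M) ∧
    (∀ (M₀ : Type*) [AddCommGroup M₀] [Module (R ⧸ I) M₀],
      IsInvertibleModule (R ⧸ I) M₀ →
      ∃ (M : Type u) (_ : AddCommGroup M) (_ : Module R M),
        IsInvertibleModule R M ∧ Nonempty (((R ⧸ I) ⊗[R] M) ≃ₗ[R ⧸ I] M₀)) := by
  have hI : I ≤ Ideal.jacobson ⊥ := IsAdicComplete.le_jacobson_bot I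
  refine ⟨fun M _ _ _ _ _ ↦ free_of_free_quotient hI, fun M₀ _ _ hM₀ ↦ ?_⟩
  have ⟨_, _, _⟩ := hM₀
  obtain ⟨M, _, _, _, _, ⟨e⟩⟩ := exists_projective_lift (I := I) M₀
  exact ⟨M, _, _, IsInvertibleModule.of_quotient hI (hM₀.of_linearEquiv e.symm), ⟨e⟩⟩

/-- **Lemma 2.6.** Let `R` be a commutative ring and `π ∈ R` an element such that `R` is
`π`-adically complete and separated.  Then reduction modulo `π` induces a bijection on
isomorphism classes of invertible modules `Pic(R) ≅ Pic(R/πR)`: (i) if `M` is an invertible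
`R`-module with `M/πM` free over `R/πR`, then `M` is free over `R`; (ii) every invertible
`R/πR`-module is the reduction of an invertible `R`-module. -/
theorem picard_iso_of_adicComplete
    (R : Type u) [CommRing R] (π : R)
    (hR : IsAdicComplete (Ideal.span {π}) R) :
    (∀ (M : Type u) [AddCommGroup M] [Module R M],
      IsInvertibleModule R M →
      Module.Free (R ⧸ Ideal.span {π}) ((R ⧸ Ideal.span {π}) ⊗[R] M) →
      Module.Free R M) ∧
    (∀ (M₀ : Type u) [AddCommGroup M₀] [Module (R ⧸ Ideal.span {π}) M₀],
      IsInvertibleModule (R ⧸ Ideal.span {π}) M₀ →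
      ∃ (M : Type u) (_ : AddCommGroup M) (_ : Module R M),
        IsInvertibleModule R M ∧
          Nonempty (((R ⧸ Ideal.span {π}) ⊗[R] M) ≃ₗ[R ⧸ Ideal.span {π}] M₀)) := by
  obtain ⟨free_of_free, exists_lift⟩ := picard_iso_of_adicComplete_general (Ideal.span {π})
  exact ⟨fun M _ _ ⟨_, _, _⟩ ↦ free_of_free M, exists_lift⟩
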